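/- Suppose cyclically reduced words $u = a^{n_1} b^{m_1} \cdots a^{n_p} b^{m_p}$ and $v = a^{r_1} b^{s_1} \cdots a^{r_q} b^{s_q}$ (with $p, q \ge 1$ and all exponents nonzero) have conjugates forming a basis of $F(a,b)$. Then, after possibly replacing $a$ by $a^{-1}$ or $b$ by $b^{-1}$ throughout, there exist an integer $t > 0$ and $\varepsilon = \pm 1$ such that either all $m_i$ and $\varepsilon s_j$ equal 1 and $\{n_1, \dots, n_p, \varepsilon r_1, \dots, \varepsilon r_q\} = \{t, t+1\}$ as sets, or symmetrically all $n_i$ and $\varepsilon r_j$ equal 1 and $\{m_1, \dots, m_p, \varepsilon s_1, \dots, \varepsilon s_q\} = \{t, t+1\}$. -/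

import Mathlib

open FreeGroup List

abbrev F2 := FreeGroup (Fin 2)

/-- The generator `a` of `F₂`. -/
def ga : F2 := FreeGroup.of 0

/-- The generator `b` of `F₂`. -/
def gb : F2 := FreeGroup.of 1

/-- `v` contains a block `x^{±k}`: `k` consecutive occurrences of the letter `x`
with the same sign, as a contiguous subword of the reduced word of `v`.
Thus "every `x`-exponent of `v` has absolute value `≤ n`" is `¬ HasBlock x (n+1) v`. -/
def HasBlock (x : Fin 2) (k : ℕ) (v : F2) : Prop :=
  (List.replicate k (x, true)) <:+: v.toWord ∨ (List.replicate k (x, false)) <:+: v.toWord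

/-- A reduced word is cyclically reduced if its last letter is not
the inverse of its first letter. -/
def CyclicallyReduced (l : List (Fin 2 × Bool)) : Prop :=
  ∀ p ∈ l.head?, ∀ q ∈ l.getLast?, q ≠ (p.1, !p.2)

/-- `(x, y)` is a basis of `F₂`: the image of `(a, b)` under an automorphism. -/
def IsBasis (x y : F2) : Prop := ∃ φ : F2 ≃* F2, φ ga = x ∧ φ gb = y

/-!
Minimise the total length of a generating pair of `F₂` over Nielsen moves and simultaneous
conjugations. A Nielsen reduced pair that generates consists of `a ^ ±1` and `b ^ ±1`, so every
property stable under these moves that holds for `(a, b)` holds for every basis. One such property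
is to arise, up to inverting an entry, from some `(a ^ ±1, b ^ ±1)` by exchanging, conjugating and
multiplying without inverses. The pairs arising in this way are `(p, q * p ^ k)` or products of
blocks `q * p ^ t` and `q * p ^ (t + 1)`, up to conjugation and symmetry. Finally, conjugate
cyclically reduced words are rotations of each other, so the exponents of `u` and `v` can be
read off from these products.
-/

section GromovProduct

variable {α β : Type*}

/-- The length of the longest common prefix of two lists. -/
def commonPrefixLength [DecidableEq β] : List β → List β → ℕ
  | a :: l, b :: m => if a = b then commonPrefixLength l m + 1 else 0
  | _, _ => 0

theorem commonPrefixLength_comm [DecidableEq β] (l m : List β) :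
    commonPrefixLength l m = commonPrefixLength m l := by
  induction l generalizing m with
  | nil => cases m <;> rfl
  | cons a l ih =>
    cases m with
    | nil => rfl
    | cons b m => simp only [commonPrefixLength, ih m, eq_comm]

theorem min_commonPrefixLength_le [DecidableEq β] (l m n : List β) :
    min (commonPrefixLength l m) (commonPrefixLength m n) ≤ commonPrefixLength l n := by
  induction l generalizing m n with
  | nil => simp [commonPrefixLength]
  | cons a l ih =>
    match m, n with
    | [], _ => simp [commonPrefixLength]
    | _ :: _, [] => simp [commonPrefixLength]
    | b :: m, c :: n =>
      have := ih m n
      simp only [commonPrefixLength]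
      split_ifs <;> simp_all

theorem isReduced_invRev {l : List (α × Bool)} : IsReduced (invRev l) ↔ IsReduced l := by
  classical
  rw [isReduced_iff_reduce_eq, reduce_invRev, invRev_injective.eq_iff, isReduced_iff_reduce_eq]

theorem getLast?_invRev (l : List (α × Bool)) :
    (invRev l).getLast? = l.head?.map fun a => (a.1, !a.2) := by
  simp [invRev]

theorem isReduced_invRev_append {l m : List (α × Bool)} (hl : IsReduced l) (hm : IsReduced m)
    (h : ∀ a ∈ l.head?, a ∉ m.head?) : IsReduced (invRev l ++ m) := by
  refine List.isChain_append.2 ⟨isReduced_invRev.2 hl, hm, ?_⟩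
  simp only [getLast?_invRev, Option.mem_def, Option.map_eq_some_iff]
  rintro _ ⟨a, ha, rfl⟩ b hb hab
  by_contra hne
  exact h a ha (hb.trans (congrArg some (Prod.ext hab.symm (by simpa [eq_comm] using hne))))

variable [DecidableEq α]

theorem norm_mk_of_isReduced {l : List (α × Bool)} (h : IsReduced l) :
    FreeGroup.norm (mk l) = l.length := by
  rw [FreeGroup.norm, toWord_mk, h.reduce_eq]

theorem norm_inv_mk_mul_mk {l m : List (α × Bool)} (hl : IsReduced l) (hm : IsReduced m) :
    FreeGroup.norm ((mk l)⁻¹ * mk m) + 2 * commonPrefixLength l m = l.length + m.length := by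
  induction l generalizing m with
  | nil => simp [commonPrefixLength, ← one_eq_mk, norm_mk_of_isReduced hm]
  | cons a l ih =>
    cases m with
    | nil => simp [commonPrefixLength, ← one_eq_mk, norm_mk_of_isReduced hl, -inv_mk]
    | cons b m =>
      by_cases hab : a = b
      · subst hab
        have hcancel : (mk (a :: l))⁻¹ * mk (a :: m) = (mk l)⁻¹ * mk m := by
          rw [← List.singleton_append, ← List.singleton_append (l := m), ← mul_mk, ← mul_mk]
          group
        have := ih (m := m) hl.tail hm.tail
        simp only [hcancel, commonPrefixLength, if_true, List.length_cons]
        omega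
      · have hred : IsReduced (invRev (a :: l) ++ b :: m) :=
          isReduced_invRev_append hl hm (by simpa using Ne.symm hab)
        simp [norm_mk_of_isReduced hred, commonPrefixLength, hab]

/-- The Gromov product of `g` and `h` based at the identity of the Cayley tree: the length of
the longest common prefix of their reduced words. -/
def gromovProduct (g h : FreeGroup α) : ℕ := commonPrefixLength g.toWord h.toWord

variable {e g : FreeGroup α}

theorem norm_inv_mul_add_gromovProduct (g h : FreeGroup α) :
    FreeGroup.norm (g⁻¹ * h) + 2 * gromovProduct g h = FreeGroup.norm g + FreeGroup.norm h := by
  have := norm_inv_mk_mul_mk (isReduced_toWord (x := g)) (isReduced_toWord (x := h))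
  rwa [mk_toWord, mk_toWord] at this

theorem norm_mul_add_gromovProduct (g h : FreeGroup α) :
    FreeGroup.norm (g * h) + 2 * gromovProduct g⁻¹ h = FreeGroup.norm g + FreeGroup.norm h := by
  simpa using norm_inv_mul_add_gromovProduct g⁻¹ h

theorem gromovProduct_comm (g h : FreeGroup α) : gromovProduct g h = gromovProduct h g :=
  commonPrefixLength_comm _ _

theorem min_gromovProduct_le (g h k : FreeGroup α) :
    min (gromovProduct g h) (gromovProduct h k) ≤ gromovProduct g k :=
  min_commonPrefixLength_le _ _ _

theorem exists_norm_eq_one_and_gromovProduct_eq_one (hg : g ≠ 1) :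
    ∃ e : FreeGroup α, FreeGroup.norm e = 1 ∧ gromovProduct e g = 1 := by
  obtain ⟨a, l, h⟩ := List.exists_cons_of_ne_nil (mt toWord_eq_nil_iff.1 hg)
  refine ⟨mk [a], norm_mk_of_isReduced .singleton, ?_⟩
  simp [gromovProduct, toWord_mk, h, commonPrefixLength]

theorem norm_lt_norm_mul_self (hg : g ≠ 1) : FreeGroup.norm g < FreeGroup.norm (g * g) := by
  have hword := reduceCyclically.conj_conjugator_reduceCyclically g.toWord
  have hword_sq : (g * g).toWord = _ := (pow_two g ▸ toWord_pow g 2).trans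
    (reduceCyclically.reduce_flatten_replicate_succ isReduced_toWord 1)
  have hcore : reduceCyclically g.toWord ≠ [] := fun h => hg <| by
    rw [h, List.append_nil] at hword
    rw [← mk_toWord (x := g), ← hword, ← mul_mk, ← inv_mk, mul_inv_cancel]
  have := List.length_pos_of_ne_nil hcore
  rw [FreeGroup.norm, FreeGroup.norm, hword_sq, ← congrArg List.length hword]
  simp only [List.length_append, List.length_flatten, List.map_replicate, List.sum_replicate,
    smul_eq_mul]
  omega

theorem two_mul_gromovProduct_inv_self_lt (hg : g ≠ 1) :
    2 * gromovProduct g⁻¹ g < FreeGroup.norm g := by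
  have := norm_mul_add_gromovProduct g g
  have := norm_lt_norm_mul_self hg
  omega

theorem norm_conj_le (he : FreeGroup.norm e = 1) (h : 1 ≤ gromovProduct e g) :
    FreeGroup.norm (e⁻¹ * g * e) ≤ FreeGroup.norm g := by
  have := norm_inv_mul_add_gromovProduct e g
  have := norm_mul_le (e⁻¹ * g) e
  omega

theorem norm_conj_add_two_le (he : FreeGroup.norm e = 1) (hg : 2 ≤ FreeGroup.norm g)
    (h : 1 ≤ gromovProduct e g) (h' : 1 ≤ gromovProduct e g⁻¹) :
    FreeGroup.norm (e⁻¹ * g * e) + 2 ≤ FreeGroup.norm g := by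
  have hleft := norm_inv_mul_add_gromovProduct e g
  have hright := norm_mul_add_gromovProduct (e⁻¹ * g) e
  have hcancel := norm_inv_mul_add_gromovProduct (e⁻¹ * g)⁻¹ g⁻¹
  have hultra := min_gromovProduct_le (e⁻¹ * g)⁻¹ g⁻¹ e
  rw [inv_inv, mul_inv_cancel_right, norm_inv_eq, norm_inv_eq, norm_inv_eq] at hcancel
  rw [gromovProduct_comm e] at h'
  omega

end GromovProduct

section NielsenReduction

variable {G α ι : Type*} [Group G] [DecidableEq α]

/-- Nielsen reducedness of a family indexed by letters, meant to assign mutually inverse elements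
to mutually inverse letters, with the cancellation in `v l * v l'` measured by
`gromovProduct (v l)⁻¹ (v l')`. -/
structure IsNielsenReduced (v : ι × Bool → FreeGroup α) : Prop where
  ne_one : ∀ l, v l ≠ 1
  two_mul_gromovProduct_le : ∀ l l', (l.1 = l'.1 → l.2 = l'.2) →
    2 * gromovProduct (v l)⁻¹ (v l') ≤ FreeGroup.norm (v l) ∧
      2 * gromovProduct (v l)⁻¹ (v l') ≤ FreeGroup.norm (v l')
  gromovProduct_add_lt : ∀ l l' l'', (l.1 = l'.1 → l.2 = l'.2) → (l'.1 = l''.1 → l'.2 = l''.2) →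
    gromovProduct (v l)⁻¹ (v l') + gromovProduct (v l')⁻¹ (v l'') < FreeGroup.norm (v l')

namespace IsNielsenReduced

variable {v : ι × Bool → FreeGroup α} {l l' : ι × Bool} {L : List (ι × Bool)}

theorem gromovProduct_prod_le (hv : IsNielsenReduced v) (hL : IsReduced (l :: l' :: L)) :
    gromovProduct (v l)⁻¹ ((l' :: L).map v).prod ≤ gromovProduct (v l)⁻¹ (v l') := by
  induction L generalizing l l' with
  | nil => simp
  | cons l'' L ih =>
    obtain ⟨hll', hL'⟩ := isReduced_cons_cons.1 hL
    have hlt := hv.gromovProduct_add_lt l l' l'' hll' (isReduced_cons_cons.1 hL').1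
    have ih := ih hL'
    rw [List.map_cons, List.prod_cons]
    generalize ((l'' :: L).map v).prod = f at *
    have hmul := norm_mul_add_gromovProduct (v l') f
    have hinv := norm_inv_mul_add_gromovProduct (v l' * f) (v l')
    have hultra := min_gromovProduct_le (v l)⁻¹ (v l' * f) (v l')
    rw [← norm_inv_eq, mul_inv_rev, inv_inv, inv_mul_cancel_left] at hinv
    omega

theorem norm_le_norm_prod (hv : IsNielsenReduced v) (hL : IsReduced (l :: L)) :
    FreeGroup.norm (v l) ≤ FreeGroup.norm ((l :: L).map v).prod ∧
      FreeGroup.norm (L.map v).prod ≤ FreeGroup.norm ((l :: L).map v).prod := by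
  induction L generalizing l with
  | nil => simp
  | cons l' L ih =>
    obtain ⟨hll', hL'⟩ := isReduced_cons_cons.1 hL
    have hcancel := hv.gromovProduct_prod_le hL
    have hle := hv.two_mul_gromovProduct_le l l' hll'
    have ih := (ih hL').1
    rw [List.map_cons, List.prod_cons]
    generalize ((l' :: L).map v).prod = f at *
    have hmul := norm_mul_add_gromovProduct (v l) f
    omega

theorem eq_singleton_of_norm_prod_eq_one (hv : IsNielsenReduced v) (hL : IsReduced L)
    (h : FreeGroup.norm (L.map v).prod = 1) : ∃ l, L = [l] := by
  rcases L with _ | ⟨l, _ | ⟨l', L⟩⟩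
  · simp at h
  · exact ⟨l, rfl⟩
  · exfalso
    obtain ⟨hll', hL'⟩ := isReduced_cons_cons.1 hL
    have hfirst := hv.norm_le_norm_prod hL
    have hsecond := hv.norm_le_norm_prod hL'
    have hcancel := hv.gromovProduct_prod_le hL
    have hle := hv.two_mul_gromovProduct_le l l' hll'
    have hl := mt FreeGroup.norm_eq_zero.1 (hv.ne_one l)
    have hl' := mt FreeGroup.norm_eq_zero.1 (hv.ne_one l')
    rw [List.map_cons, List.prod_cons] at h hfirst
    generalize ((l' :: L).map v).prod = f at *
    have hmul := norm_mul_add_gromovProduct (v l) f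
    omega

end IsNielsenReduced

/-- The value of a letter of the free group on `ι` under the homomorphism extending `v`. -/
def letterValue (v : ι → G) (l : ι × Bool) : G := cond l.2 (v l.1) (v l.1)⁻¹

theorem letterValue_not (v : ι → G) (i : ι) (b : Bool) :
    letterValue v (i, !b) = (letterValue v (i, b))⁻¹ := by
  cases b <;> simp [letterValue]

theorem lift_eq_prod_letterValue [DecidableEq ι] (v : ι → G) (w : FreeGroup ι) :
    FreeGroup.lift v w = (w.toWord.map (letterValue v)).prod := by
  conv_lhs => rw [← mk_toWord (x := w), lift_mk]
  rfl

theorem commute_letterValue (v : ι → G) {l l' : ι × Bool} (hl : l.1 = l'.1) :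
    Commute (letterValue v l) (letterValue v l') := by
  obtain ⟨i, b⟩ := l
  obtain ⟨j, c⟩ := l'
  obtain rfl : i = j := hl
  cases b <;> cases c <;> simp [letterValue, Commute.inv_left_iff, Commute.inv_right_iff]

theorem rel_letterValue {R : G → G → Prop} (hswap : ∀ {x y}, R x y → R y x)
    (hinv : ∀ {x y}, R x y → R x⁻¹ y) {x y : G} (h : R x y) {l l' : Fin 2 × Bool}
    (hl : l.1 ≠ l'.1) : R (letterValue ![x, y] l) (letterValue ![x, y] l') := by
  have hsign : ∀ {x y} b c, R x y → R (cond b x x⁻¹) (cond c y y⁻¹) := by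
    rintro x y (_ | _) (_ | _) h
    exacts [hinv (hswap (hinv (hswap h))), hinv h, hswap (hinv (hswap h)), h]
  obtain ⟨i, b⟩ := l
  obtain ⟨j, c⟩ := l'
  fin_cases i <;> fin_cases j
  exacts [absurd rfl hl, hsign b c h, hsign b c (hswap h), absurd rfl hl]

/-- A relation on pairs closed under the elementary Nielsen moves and simultaneous conjugation. -/
structure NielsenClosed (S : G → G → Prop) : Prop where
  swap : ∀ {x y}, S x y → S y x
  inv_left : ∀ {x y}, S x y → S x⁻¹ y
  mul_left : ∀ {x y}, S x y → S x (x * y)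
  conj : ∀ {x y} (g : G), S x y → S (g⁻¹ * x * g) (g⁻¹ * y * g)

namespace NielsenClosed

variable {S T : G → G → Prop} {x y : G}

theorem and (hS : NielsenClosed S) (hT : NielsenClosed T) :
    NielsenClosed fun x y => S x y ∧ T x y where
  swap := And.imp hS.swap hT.swap
  inv_left := And.imp hS.inv_left hT.inv_left
  mul_left := And.imp hS.mul_left hT.mul_left
  conj g := And.imp (hS.conj g) (hT.conj g)

theorem not (hS : NielsenClosed S) : NielsenClosed fun x y => ¬S x y where
  swap := mt hS.swap
  inv_left := mt fun h => by simpa using hS.inv_left h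
  mul_left := mt fun h => by simpa using hS.inv_left (hS.mul_left (hS.inv_left h))
  conj g := mt fun h => by simpa [mul_assoc] using hS.conj g⁻¹ h

end NielsenClosed

/-- A pair of minimal total length among those in `S`. -/
def IsMinimalPair (S : FreeGroup α → FreeGroup α → Prop) (x y : FreeGroup α) : Prop :=
  S x y ∧ ∀ x' y', S x' y' →
    FreeGroup.norm x + FreeGroup.norm y ≤ FreeGroup.norm x' + FreeGroup.norm y'

variable {S : FreeGroup α → FreeGroup α → Prop} {x y : FreeGroup α}

theorem exists_isMinimalPair (h : S x y) : ∃ x₀ y₀, IsMinimalPair S x₀ y₀ := by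
  obtain ⟨⟨x₀, y₀⟩, h₀, hmin⟩ := exists_minimalFor_of_wellFoundedLT
    (fun z : FreeGroup α × FreeGroup α => S z.1 z.2)
    (fun z => FreeGroup.norm z.1 + FreeGroup.norm z.2) ⟨(x, y), h⟩
  exact ⟨x₀, y₀, h₀, fun x' y' h' => (le_total _ _).elim id (hmin (j := (x', y')) h')⟩

namespace IsMinimalPair

theorem swap (hS : NielsenClosed S) (h : IsMinimalPair S x y) : IsMinimalPair S y x :=
  ⟨hS.swap h.1, fun x' y' h' => add_comm (FreeGroup.norm x) _ ▸ h.2 x' y' h'⟩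

theorem inv_left (hS : NielsenClosed S) (h : IsMinimalPair S x y) : IsMinimalPair S x⁻¹ y :=
  ⟨hS.inv_left h.1, norm_inv_eq (x := x) ▸ h.2⟩

theorem inv_right (hS : NielsenClosed S) (h : IsMinimalPair S x y) : IsMinimalPair S x y⁻¹ :=
  ((h.swap hS).inv_left hS).swap hS

theorem two_mul_gromovProduct_le_left (hS : NielsenClosed S) (h : IsMinimalPair S x y) :
    2 * gromovProduct x⁻¹ y ≤ FreeGroup.norm x := by
  have := h.2 _ _ (hS.mul_left h.1)
  have := norm_mul_add_gromovProduct x y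
  omega

theorem two_mul_gromovProduct_le_right (hS : NielsenClosed S) (h : IsMinimalPair S x y) :
    2 * gromovProduct x⁻¹ y ≤ FreeGroup.norm y := by
  have := ((h.inv_left hS).inv_right hS).swap hS |>.two_mul_gromovProduct_le_left hS
  rwa [inv_inv, norm_inv_eq, gromovProduct_comm] at this

/-- Otherwise `x` and `y⁻¹` start with the same letter `e`, half of `x` cancels in `x * y`, and
conjugating the pair `(x, x * y)` by `e` makes it shorter. -/
theorem gromovProduct_inv_add_lt (hS : NielsenClosed S) (h : IsMinimalPair S x y) (hx : x ≠ 1) :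
    gromovProduct y⁻¹ x + gromovProduct x⁻¹ y < FreeGroup.norm x := by
  by_contra hlt
  have hxy := h.two_mul_gromovProduct_le_left hS
  have hxy' := h.two_mul_gromovProduct_le_right hS
  have hyx := (h.swap hS).two_mul_gromovProduct_le_right hS
  have hnorm := mt FreeGroup.norm_eq_zero.1 hx
  obtain ⟨e, he, hex⟩ := exists_norm_eq_one_and_gromovProduct_eq_one hx
  have hey : 1 ≤ gromovProduct e y⁻¹ := by
    have := min_gromovProduct_le e x y⁻¹
    rw [gromovProduct_comm x] at this
    omega
  have hmul := norm_mul_add_gromovProduct x y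
  have hexy : 1 ≤ gromovProduct e (x * y) := by
    have := min_gromovProduct_le e x (x * y)
    have := norm_inv_mul_add_gromovProduct x (x * y)
    rw [inv_mul_cancel_left] at this
    omega
  have hexy' : 1 ≤ gromovProduct e (x * y)⁻¹ := by
    have := min_gromovProduct_le e y⁻¹ (x * y)⁻¹
    have := norm_inv_mul_add_gromovProduct y⁻¹ (x * y)⁻¹
    rw [mul_inv_rev, inv_inv, mul_inv_cancel_left, norm_inv_eq, norm_inv_eq, ← mul_inv_rev,
      norm_inv_eq] at this
    omega
  have := norm_conj_le he hex.ge
  have := norm_conj_add_two_le he (by omega) hexy hexy'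
  have := h.2 _ _ (hS.conj e (hS.mul_left h.1))
  omega

theorem gromovProduct_add_lt (hS : NielsenClosed S) (h : IsMinimalPair S x y) (hx : x ≠ 1) :
    gromovProduct y x + gromovProduct x⁻¹ y < FreeGroup.norm x := by
  have := h.two_mul_gromovProduct_le_left hS
  have := ((h.inv_right hS).swap hS).two_mul_gromovProduct_le_right hS
  have := min_gromovProduct_le x⁻¹ y x
  have := two_mul_gromovProduct_inv_self_lt hx
  rw [inv_inv] at *
  omega

theorem apply_letterValue (hS : NielsenClosed S) (h : IsMinimalPair S x y) {l l' : Fin 2 × Bool}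
    (hl : l.1 ≠ l'.1) : IsMinimalPair S (letterValue ![x, y] l) (letterValue ![x, y] l') :=
  rel_letterValue (R := IsMinimalPair S) (swap hS) (inv_left hS) h hl

theorem letterValue_ne_one (hS : NielsenClosed S) (hcomm : ∀ x y, S x y → ¬Commute x y)
    (h : IsMinimalPair S x y) (l : Fin 2 × Bool) : letterValue ![x, y] l ≠ 1 := fun hl =>
  hcomm _ _ (h.apply_letterValue hS (l := l) (l' := (l.1 + 1, true)) (by simp)).1
    (hl ▸ Commute.one_left _)

theorem two_mul_gromovProduct_letterValue_le (hS : NielsenClosed S)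
    (hcomm : ∀ x y, S x y → ¬Commute x y) (h : IsMinimalPair S x y) {l l' : Fin 2 × Bool}
    (hl : l.1 = l'.1 → l.2 = l'.2) :
    2 * gromovProduct (letterValue ![x, y] l)⁻¹ (letterValue ![x, y] l') ≤
        FreeGroup.norm (letterValue ![x, y] l) ∧
      2 * gromovProduct (letterValue ![x, y] l)⁻¹ (letterValue ![x, y] l') ≤
        FreeGroup.norm (letterValue ![x, y] l') := by
  by_cases hi : l.1 = l'.1
  · obtain rfl : l = l' := Prod.ext hi (hl hi)
    have hself := two_mul_gromovProduct_inv_self_lt (h.letterValue_ne_one hS hcomm l)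
    exact ⟨hself.le, hself.le⟩
  · have hpair := h.apply_letterValue hS hi
    exact ⟨hpair.two_mul_gromovProduct_le_left hS, hpair.two_mul_gromovProduct_le_right hS⟩

theorem isNielsenReduced (hS : NielsenClosed S) (hcomm : ∀ x y, S x y → ¬Commute x y)
    (h : IsMinimalPair S x y) : IsNielsenReduced (letterValue ![x, y]) := by
  have hne := h.letterValue_ne_one hS hcomm
  have hself := fun l => two_mul_gromovProduct_inv_self_lt (hne l)
  have hle := fun l l' => h.two_mul_gromovProduct_letterValue_le hS hcomm (l := l) (l' := l')
  refine ⟨hne, hle, fun l l' l'' hll' hll'' => ?_⟩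
  by_cases hi : l.1 = l'.1
  · obtain rfl : l = l' := Prod.ext hi (hll' hi)
    have := hself l
    have := (hle l l'' hll'').1
    omega
  by_cases hi' : l'.1 = l''.1
  · obtain rfl : l' = l'' := Prod.ext hi' (hll'' hi')
    have := hself l'
    have := (hle l l' hll').2
    omega
  have hi'' : l.1 = l''.1 := by omega
  obtain ⟨i, b⟩ := l
  obtain ⟨k, c⟩ := l''
  obtain rfl : i = k := hi''
  obtain rfl | rfl := b.eq_or_eq_not c
  · exact (h.apply_letterValue hS hi').gromovProduct_inv_add_lt hS (hne l')
  · rw [letterValue_not, inv_inv]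
    exact (h.apply_letterValue hS hi').gromovProduct_add_lt hS (hne l')

end IsMinimalPair

end NielsenReduction

section GeneratingPair

variable {G α : Type*} [Group G]

/-- The pair `(x, y)` generates the group. -/
def GeneratingPair (x y : G) : Prop := Subgroup.closure {x, y} = ⊤

variable {x y : G}

theorem generatingPair_iff_forall :
    GeneratingPair x y ↔ ∀ H : Subgroup G, x ∈ H → y ∈ H → H = ⊤ := by
  refine ⟨fun h H hx hy => eq_top_iff.2 ?_, fun h => h _ ?_ ?_⟩
  · exact h.symm.trans_le ((Subgroup.closure_le H).2 (by simp [Set.insert_subset_iff, hx, hy]))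
  all_goals exact Subgroup.subset_closure (by simp)

theorem GeneratingPair.map {H : Type*} [Group H] (h : GeneratingPair x y) {φ : G →* H}
    (hφ : Function.Surjective φ) : GeneratingPair (φ x) (φ y) := by
  rw [GeneratingPair, ← Set.image_pair, ← MonoidHom.map_closure, h,
    Subgroup.map_top_of_surjective φ hφ]

theorem GeneratingPair.nielsenClosed : NielsenClosed (GeneratingPair (G := G)) where
  swap h := by rwa [GeneratingPair, Set.pair_comm]
  inv_left h := generatingPair_iff_forall.2 fun H hx hy =>
    generatingPair_iff_forall.1 h H (by simpa using H.inv_mem hx) hy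
  mul_left h := generatingPair_iff_forall.2 fun H hx hy =>
    generatingPair_iff_forall.1 h H hx ((H.mul_mem_cancel_left hx).1 hy)
  conj g h := by
    simpa [MulAut.conj_apply] using
      h.map (φ := (MulAut.conj g⁻¹).toMonoidHom) (MulAut.conj g⁻¹).surjective

theorem GeneratingPair.not_commute (h : GeneratingPair x y) {a b : G} (hab : ¬Commute a b) :
    ¬Commute x y := fun hxy => hab <| by
  have hcentralizer : Subgroup.centralizer {x, y} = ⊤ := by
    refine generatingPair_iff_forall.1 h _ ?_ ?_ <;>
      simp [Subgroup.mem_centralizer_iff, hxy.eq]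
  have hsubset := Subgroup.centralizer_eq_top_iff_subset.1 hcentralizer
  have hcenter : Subgroup.center G = ⊤ :=
    generatingPair_iff_forall.1 h _ (hsubset (by simp)) (hsubset (by simp))
  exact Subgroup.mem_center_iff.1 (hcenter ▸ Subgroup.mem_top b) a

theorem not_commute_ga_gb : ¬Commute ga gb := by
  change ga * gb ≠ gb * ga
  decide

theorem GeneratingPair.exists_eq_letterValue [DecidableEq α] {x y z : FreeGroup α}
    (h : GeneratingPair x y) (hred : IsNielsenReduced (letterValue ![x, y]))
    (hz : FreeGroup.norm z = 1) : ∃ l, letterValue ![x, y] l = z := by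
  have hrange : (FreeGroup.lift ![x, y]).range = ⊤ :=
    generatingPair_iff_forall.1 h _ ⟨of 0, by simp⟩ ⟨of 1, by simp⟩
  obtain ⟨w, rfl⟩ := MonoidHom.range_eq_top.1 hrange z
  rw [lift_eq_prod_letterValue] at hz ⊢
  obtain ⟨l, hl⟩ := hred.eq_singleton_of_norm_prod_eq_one isReduced_toWord hz
  exact ⟨l, by simp [hl]⟩

theorem generatingPair_ga_gb : GeneratingPair ga gb := by
  rw [GeneratingPair, ← closure_range_of]
  congr 1
  ext; simp [Fin.exists_fin_two, ga, gb, eq_comm]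

theorem IsBasis.generatingPair {x y : F2} (h : IsBasis x y) : GeneratingPair x y := by
  obtain ⟨φ, rfl, rfl⟩ := h
  exact generatingPair_ga_gb.map (φ := φ.toMonoidHom) φ.surjective

theorem IsMinimalPair.rel_ga_gb {S : F2 → F2 → Prop} (hS : NielsenClosed S)
    (hgen : ∀ x y, S x y → GeneratingPair x y) {x y : F2} (h : IsMinimalPair S x y) :
    S ga gb := by
  have hxy := hgen x y h.1
  have hred := h.isNielsenReduced hS fun _ _ h => (hgen _ _ h).not_commute not_commute_ga_gb
  obtain ⟨l, hl⟩ := hxy.exists_eq_letterValue hred (z := ga) (norm_of 0)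
  obtain ⟨l', hl'⟩ := hxy.exists_eq_letterValue hred (z := gb) (norm_of 1)
  have hne : l.1 ≠ l'.1 := fun hll' =>
    not_commute_ga_gb (hl ▸ hl' ▸ commute_letterValue ![x, y] hll')
  exact hl ▸ hl' ▸ rel_letterValue (R := S) hS.swap hS.inv_left h.1 hne

theorem GeneratingPair.nielsen_induction {P : F2 → F2 → Prop} (hP : NielsenClosed P)
    (hbase : P ga gb) {x y : F2} (h : GeneratingPair x y) : P x y := by
  by_contra hxy
  have hS : NielsenClosed fun x y => GeneratingPair x y ∧ ¬P x y := nielsenClosed.and hP.not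
  obtain ⟨x₀, y₀, hmin⟩ := exists_isMinimalPair
    (S := fun x y => GeneratingPair x y ∧ ¬P x y) ⟨h, hxy⟩
  exact (hmin.rel_ga_gb hS fun _ _ => And.left).2 hbase

end GeneratingPair

section Conj

variable {G : Type*} [Group G] {x y : G}

theorem isConj_inv_mul_mul (g x : G) : IsConj (g⁻¹ * x * g) x :=
  isConj_iff.2 ⟨g, by group⟩

theorem isConj_zpow (h : IsConj x y) (n : ℤ) : IsConj (x ^ n) (y ^ n) := by
  obtain ⟨c, hc⟩ := h
  exact ⟨c, hc.zpow_right n⟩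

end Conj

section PositivePair

variable {G : Type*} [Group G] {p q x y : G}

/-- The pairs obtained from `(p, q)` by exchanging the entries, conjugating simultaneously, and
multiplying one entry by the other, but never by its inverse. -/
inductive PositivePair (p q : G) : G → G → Prop
  | base : PositivePair p q p q
  | swap {x y : G} : PositivePair p q x y → PositivePair p q y x
  | conj {x y : G} (g : G) : PositivePair p q x y → PositivePair p q (g⁻¹ * x * g) (g⁻¹ * y * g)
  | mul_left {x y : G} : PositivePair p q x y → PositivePair p q x (x * y)

theorem PositivePair.inv (h : PositivePair p q x y) : PositivePair p⁻¹ q⁻¹ x⁻¹ y⁻¹ := by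
  induction h with
  | base => exact base
  | swap _ ih => exact ih.swap
  | conj g _ ih => simpa [mul_assoc] using ih.conj g
  | @mul_left x y _ ih => simpa [mul_assoc] using ih.mul_left.conj x⁻¹

/-- The pair `(x, y)` is positive with respect to some `(p ^ ±1, q ^ ±1)`, possibly after
inverting `y`. Inverting `x` is not needed, by `PositivePair.inv`. -/
def IsPositivizable (p q x y : G) : Prop :=
  ∃ δ γ ε : ℤˣ, PositivePair (p ^ (δ : ℤ)) (q ^ (γ : ℤ)) x (y ^ (ε : ℤ))

theorem PositivePair.isPositivizable (h : PositivePair p q x y) : IsPositivizable p q x y :=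
  ⟨1, 1, 1, by simpa⟩

namespace IsPositivizable

theorem of_zpow {δ γ : ℤˣ} (h : IsPositivizable (p ^ (δ : ℤ)) (q ^ (γ : ℤ)) x y) :
    IsPositivizable p q x y := by
  obtain ⟨δ', γ', ε, h⟩ := h
  exact ⟨δ * δ', γ * γ', ε, by simpa only [Units.val_mul, zpow_mul]⟩

theorem inv_right (h : IsPositivizable p q x y) : IsPositivizable p q x y⁻¹ := by
  obtain ⟨δ, γ, ε, h⟩ := h
  exact ⟨δ, γ, -ε, by simpa⟩

theorem inv_left (h : IsPositivizable p q x y) : IsPositivizable p q x⁻¹ y := by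
  obtain ⟨δ, γ, ε, h⟩ := h
  exact ⟨-δ, -γ, -ε, by simpa using h.inv⟩

theorem swap (h : IsPositivizable p q x y) : IsPositivizable p q y x := by
  obtain ⟨δ, γ, ε, h⟩ := h
  have hswap : IsPositivizable p q (y ^ (ε : ℤ)) x := of_zpow h.swap.isPositivizable
  obtain rfl | rfl := Int.units_eq_one_or ε
  · simpa using hswap
  · simpa using hswap.inv_left

theorem conj (g : G) (h : IsPositivizable p q x y) :
    IsPositivizable p q (g⁻¹ * x * g) (g⁻¹ * y * g) := by
  obtain ⟨δ, γ, ε, h⟩ := h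
  refine ⟨δ, γ, ε, ?_⟩
  have hconj := conj_zpow (i := (ε : ℤ)) (a := g⁻¹) (b := y)
  rw [inv_inv] at hconj
  exact hconj ▸ h.conj g

end IsPositivizable

theorem PositivePair.isPositivizable_inv_mul (h : PositivePair p q x y) :
    IsPositivizable p q x (x⁻¹ * y) ∧ IsPositivizable p q y (y⁻¹ * x) := by
  induction h with
  | base =>
    have hp : IsPositivizable p q p⁻¹ (p⁻¹ * q) :=
      .of_zpow (δ := -1) (γ := 1) (by simpa using base.mul_left.isPositivizable)
    have hq : IsPositivizable p q q⁻¹ (q⁻¹ * p) :=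
      .of_zpow (δ := 1) (γ := -1) (by simpa using base.swap.mul_left.isPositivizable)
    exact ⟨by simpa using hp.inv_left, by simpa using hq.inv_left⟩
  | swap _ ih => exact ih.symm
  | conj g _ ih => exact ⟨by simpa [mul_assoc] using ih.1.conj g,
      by simpa [mul_assoc] using ih.2.conj g⟩
  | @mul_left x y h _ =>
    have hyx := h.swap.mul_left.swap.isPositivizable.inv_right.conj y
    exact ⟨by simpa using h.isPositivizable, by simpa [mul_assoc] using hyx⟩

theorem IsPositivizable.mul_left (h : IsPositivizable p q x y) :
    IsPositivizable p q x (x * y) := by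
  obtain ⟨δ, γ, ε, h⟩ := h
  obtain rfl | rfl := Int.units_eq_one_or ε
  · exact .of_zpow (by simpa using h.mul_left.isPositivizable)
  · have hinv := of_zpow h.isPositivizable_inv_mul.1
    simpa [mul_assoc] using hinv.inv_right.conj x⁻¹

theorem IsPositivizable.nielsenClosed (p q : G) : NielsenClosed (IsPositivizable p q) where
  swap := swap
  inv_left := inv_left
  mul_left := mul_left
  conj := conj

end PositivePair

section BlockForm

variable {G : Type*} [Group G] {p q x y : G}

/-- The product of the blocks `q * p ^ n` for `n` in the list `e`. -/
def blockProd (p q : G) (e : List ℕ) : G := (e.map fun n => q * p ^ n).prod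

theorem blockProd_append (p q : G) (e e' : List ℕ) :
    blockProd p q (e ++ e') = blockProd p q e * blockProd p q e' := by
  simp [blockProd]

/-- Up to simultaneous conjugation, `x` and `y` are products of blocks `q * p ^ t` and
`q * p ^ (t + 1)` for a common `t > 0`, and both exponents occur. -/
def HasBlockForm (p q x y : G) : Prop :=
  ∃ t > 0, ∃ (g : G) (e e' : List ℕ), x = g⁻¹ * blockProd p q e * g ∧
    y = g⁻¹ * blockProd p q e' * g ∧ ∀ n, n ∈ e ∨ n ∈ e' ↔ n = t ∨ n = t + 1

namespace HasBlockForm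

theorem swap (h : HasBlockForm p q x y) : HasBlockForm p q y x := by
  obtain ⟨t, ht, g, e, e', hx, hy, hmem⟩ := h
  exact ⟨t, ht, g, e', e, hy, hx, fun n => or_comm.trans (hmem n)⟩

theorem conj (k : G) (h : HasBlockForm p q x y) :
    HasBlockForm p q (k⁻¹ * x * k) (k⁻¹ * y * k) := by
  obtain ⟨t, ht, g, e, e', rfl, rfl, hmem⟩ := h
  exact ⟨t, ht, g * k, e, e', by group, by group, hmem⟩

theorem mul_left (h : HasBlockForm p q x y) : HasBlockForm p q x (x * y) := by
  obtain ⟨t, ht, g, e, e', rfl, rfl, hmem⟩ := h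
  refine ⟨t, ht, g, e, e ++ e', rfl, by rw [blockProd_append]; group, fun n => ?_⟩
  rw [List.mem_append, ← or_assoc, or_self, hmem]

end HasBlockForm

/-- Up to simultaneous conjugation, `(x, y)` is `(p, q * p ^ k)` for some `k`. -/
def IsPowerShear (p q x y : G) : Prop :=
  ∃ (k : ℕ) (g : G), x = g⁻¹ * p * g ∧ y = g⁻¹ * (q * p ^ k) * g

namespace IsPowerShear

theorem conj (a : G) (h : IsPowerShear p q x y) :
    IsPowerShear p q (a⁻¹ * x * a) (a⁻¹ * y * a) := by
  obtain ⟨k, g, rfl, rfl⟩ := h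
  exact ⟨k, g * a, by group, by group⟩

theorem isConj (h : IsPowerShear p q x y) : IsConj x p := by
  obtain ⟨k, g, rfl, -⟩ := h
  exact isConj_inv_mul_mul g p

theorem mul_left (h : IsPowerShear p q x y) : IsPowerShear p q x (x * y) := by
  obtain ⟨k, g, rfl, rfl⟩ := h
  exact ⟨k + 1, p⁻¹ * g, by group, by group⟩

theorem mul_right (h : IsPowerShear p q x y) :
    IsPowerShear q p y (y * x) ∨ HasBlockForm p q y (y * x) := by
  obtain ⟨k, g, rfl, rfl⟩ := h
  obtain rfl | hk := k.eq_zero_or_pos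
  · exact .inl ⟨1, q⁻¹ * g, by group, by group⟩
  · exact .inr ⟨k, hk, g, [k], [k + 1], by simp [blockProd],
      by simp [blockProd, pow_succ, mul_assoc], by simp⟩

end IsPowerShear

/-- The shapes of positive pairs, up to exchanging `p` and `q`. -/
def HasPositiveShape (p q x y : G) : Prop :=
  IsPowerShear p q x y ∨ IsPowerShear p q y x ∨ HasBlockForm p q x y

namespace HasPositiveShape

theorem swap (h : HasPositiveShape p q x y) : HasPositiveShape p q y x := by
  obtain h | h | h := h
  exacts [.inr (.inl h), .inl h, .inr (.inr h.swap)]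

theorem conj (g : G) (h : HasPositiveShape p q x y) :
    HasPositiveShape p q (g⁻¹ * x * g) (g⁻¹ * y * g) :=
  h.imp (.conj g) (Or.imp (.conj g) (.conj g))

theorem mul_left (h : HasPositiveShape p q x y) :
    HasPositiveShape p q x (x * y) ∨ HasPositiveShape q p x (x * y) := by
  obtain h | h | h := h
  · exact .inl (.inl h.mul_left)
  · exact h.mul_right.symm.imp (.inr ∘ .inr) .inl
  · exact .inl (.inr (.inr h.mul_left))

theorem hasBlockForm (h : HasPositiveShape p q x y) (hx : ¬IsConj x p) (hy : ¬IsConj y p) :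
    HasBlockForm p q x y := by
  obtain h | h | h := h
  exacts [absurd h.isConj hx, absurd h.isConj hy, h]

end HasPositiveShape

theorem PositivePair.hasPositiveShape (h : PositivePair p q x y) :
    HasPositiveShape p q x y ∨ HasPositiveShape q p x y := by
  induction h with
  | base => exact .inl (.inl ⟨0, 1, by simp, by simp⟩)
  | swap _ ih => exact ih.imp .swap .swap
  | conj g _ ih => exact ih.imp (.conj g) (.conj g)
  | mul_left _ ih => exact ih.elim (fun h => h.mul_left) fun h => h.mul_left.symm

end BlockForm

section CyclicWords

variable {α : Type*}

theorem isCyclicallyReduced_cons {a : α × Bool} {l : List (α × Bool)} :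
    IsCyclicallyReduced (a :: l) ↔ FreeGroup.IsReduced (a :: l ++ [a]) := by
  rw [isCyclicallyReduced_iff, FreeGroup.IsReduced, FreeGroup.IsReduced, List.isChain_append]
  simp

theorem isCyclicallyReduced_concat {a : α × Bool} {l : List (α × Bool)} :
    IsCyclicallyReduced (l ++ [a]) ↔ FreeGroup.IsReduced (a :: l ++ [a]) := by
  rw [isCyclicallyReduced_iff, FreeGroup.IsReduced, FreeGroup.IsReduced, List.cons_append,
    List.isChain_cons]
  simp [and_comm]

theorem isCyclicallyReduced_cons_iff_concat {a : α × Bool} {l : List (α × Bool)} :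
    IsCyclicallyReduced (a :: l) ↔ IsCyclicallyReduced (l ++ [a]) :=
  isCyclicallyReduced_cons.trans isCyclicallyReduced_concat.symm

theorem not_isCyclicallyReduced_invRev_append_append {l : List (α × Bool)} (hl : l ≠ [])
    (w : List (α × Bool)) : ¬IsCyclicallyReduced (invRev l ++ w ++ l) := by
  obtain ⟨l, a, rfl⟩ := (List.eq_nil_or_concat l).resolve_left hl
  rintro ⟨-, h⟩
  simpa [invRev] using h a (by simp) (a.1, !a.2) (by simp [invRev])

theorem isReduced_invRev_append_append {l w : List (α × Bool)} (hl : FreeGroup.IsReduced l)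
    (hw : FreeGroup.IsReduced w) (hw0 : w ≠ []) (h : ∀ a ∈ l.head?, a ∉ w.head?)
    (h' : ∀ a ∈ l.head?, a ∉ (invRev w).head?) :
    FreeGroup.IsReduced (invRev l ++ w ++ l) := by
  refine .append_overlap (isReduced_invRev_append hl hw h) ?_ hw0
  simpa using isReduced_invRev_append (isReduced_invRev.2 hw) hl fun a ha ha' => h' a ha' ha

theorem exists_isRotated_mk_eq_conj {a : α × Bool} {w : List (α × Bool)}
    (hw : IsCyclicallyReduced w) (ha : a ∈ w.head? ∨ a ∈ (invRev w).head?) :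
    ∃ w', IsCyclicallyReduced w' ∧ w' ~r w ∧ mk w' = (mk [a])⁻¹ * mk w * mk [a] := by
  obtain ha | ha := ha <;> obtain ⟨l, hl⟩ := List.head?_eq_some_iff.1 ha
  · subst hl
    refine ⟨l ++ [a], isCyclicallyReduced_cons_iff_concat.1 hw, .symm ⟨1, by simp⟩, ?_⟩
    rw [← List.singleton_append (x := a) (l := l), ← mul_mk, ← mul_mk, inv_mul_cancel_left]
  · obtain rfl : w = invRev l ++ invRev [a] := by
      rw [← invRev_append, List.singleton_append, ← hl, invRev_invRev]
    refine ⟨invRev [a] ++ invRev l, isCyclicallyReduced_cons_iff_concat.2 hw,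
      ⟨1, by simp [invRev]⟩, ?_⟩
    rw [← mul_mk, ← mul_mk, ← inv_mk, mul_assoc, inv_mul_cancel_right]

theorem mk_inj_of_isReduced {l m : List (α × Bool)} (hl : FreeGroup.IsReduced l)
    (hm : FreeGroup.IsReduced m) (h : mk l = mk m) : l = m := by
  classical
  rw [← hl.reduce_eq, ← hm.reduce_eq, ← toWord_mk, h, toWord_mk]

theorem isRotated_of_mk_eq_conj {u w g : List (α × Bool)} (hu : IsCyclicallyReduced u)
    (hw : IsCyclicallyReduced w) (hg : FreeGroup.IsReduced g)
    (h : mk u = (mk g)⁻¹ * mk w * mk g) : u ~r w := by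
  induction g generalizing w with
  | nil =>
    rw [← one_eq_mk, inv_one, one_mul, mul_one] at h
    rw [mk_inj_of_isReduced hu.isReduced hw.isReduced h]
  | cons a g ih =>
    by_cases ha : a ∈ w.head? ∨ a ∈ (invRev w).head?
    · obtain ⟨w', hw', hrot, hmk⟩ := exists_isRotated_mk_eq_conj hw ha
      refine (ih hw' (List.IsChain.tail hg) ?_).trans hrot
      rw [h, hmk, ← List.singleton_append, ← mul_mk]
      group
    obtain rfl | hw0 := eq_or_ne w []
    · rw [← one_eq_mk, mul_one, inv_mul_cancel, one_eq_mk] at h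
      rw [mk_inj_of_isReduced hu.isReduced hw.isReduced h]
    · rw [not_or] at ha
      have hred := isReduced_invRev_append_append hg hw.isReduced hw0 (by simpa using ha.1)
        (by simpa using ha.2)
      rw [inv_mk, mul_mk, mul_mk] at h
      rw [mk_inj_of_isReduced hu.isReduced hred h] at hu
      exact absurd hu (not_isCyclicallyReduced_invRev_append_append (by simp) w)

theorem isRotated_of_isConj_mk {u w : List (α × Bool)} (hu : IsCyclicallyReduced u)
    (hw : IsCyclicallyReduced w) (h : IsConj (mk u) (mk w)) : u ~r w := by
  classical
  obtain ⟨g, hg⟩ := isConj_iff.1 h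
  refine isRotated_of_mk_eq_conj (g := g.toWord) hu hw isReduced_toWord ?_
  rw [mk_toWord, ← hg]
  group

end CyclicWords

section Syllables

variable {α : Type*} {rs rs' : List (α × ℤ)}

theorem isRotated_splitBy {β : Type*} (r : β → β → Bool) {l m : List β} (h : l ~r m)
    (hl : ∀ x ∈ l.getLast?, ∀ y ∈ l.head?, r x y = false)
    (hm : ∀ x ∈ m.getLast?, ∀ y ∈ m.head?, r x y = false) : l.splitBy r ~r m.splitBy r := by
  obtain ⟨n, hn, rfl⟩ := List.isRotated_iff_mod.1 h
  rw [List.rotate_eq_drop_append_take hn] at hm ⊢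
  rw [← List.take_append_drop n l] at hl
  nth_rw 1 [← List.take_append_drop n l]
  generalize l.take n = s at hl hm ⊢
  generalize l.drop n = t at hl hm ⊢
  obtain rfl | hs := eq_or_ne s []
  · simp [List.IsRotated.refl]
  obtain rfl | ht := eq_or_ne t []
  · simp [List.IsRotated.refl]
  rw [List.splitBy_append, List.splitBy_append]
  · exact List.isRotated_append
  · simpa [List.getLast?_append_of_ne_nil _ ht, List.head?_append_of_ne_nil _ hs] using hl
  · simpa [List.getLast?_append_of_ne_nil _ hs, List.head?_append_of_ne_nil _ ht] using hm

/-- The element `a₁ ^ n₁ ⋯ aₖ ^ nₖ` given by the list of its syllables `(aᵢ, nᵢ)`. -/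
def syllableProd (rs : List (α × ℤ)) : FreeGroup α := (rs.map fun r => of r.1 ^ r.2).prod

/-- All exponents are nonzero and cyclically adjacent syllables have different bases. -/
structure IsCyclicSyllableList (rs : List (α × ℤ)) : Prop where
  ne_zero : ∀ r ∈ rs, r.2 ≠ 0
  isChain : rs.IsChain fun r s => r.1 ≠ s.1
  getLast_ne_head : ∀ r ∈ rs.getLast?, ∀ s ∈ rs.head?, r.1 ≠ s.1

theorem syllableProd_inv (rs : List (α × ℤ)) :
    (syllableProd rs)⁻¹ = syllableProd (rs.reverse.map fun r => (r.1, -r.2)) := by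
  simp [syllableProd, List.prod_inv_reverse, Function.comp_def]

theorem IsCyclicSyllableList.inv (h : IsCyclicSyllableList rs) :
    IsCyclicSyllableList (rs.reverse.map fun r => (r.1, -r.2)) where
  ne_zero := by
    rw [List.forall_mem_map]
    simpa using h.ne_zero
  isChain := by
    rw [List.isChain_map, List.isChain_reverse]
    simpa [ne_comm] using h.isChain
  getLast_ne_head := by
    simp only [List.getLast?_map, List.getLast?_reverse, List.head?_map, List.head?_reverse,
      Option.mem_map]
    rintro _ ⟨r, hr, rfl⟩ _ ⟨s, hs, rfl⟩
    exact (h.getLast_ne_head s hs r hr).symm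

section ReducedWord

variable [DecidableEq α]

theorem toWord_of_zpow (i : α) (n : ℤ) :
    (of i ^ n).toWord = List.replicate n.natAbs (i, decide (0 < n)) := by
  obtain ⟨n, rfl | rfl⟩ := n.eq_nat_or_neg
  · rw [zpow_natCast, toWord_of_pow, Int.natAbs_natCast]
    rcases n with - | n <;> simp
  · rw [zpow_neg, zpow_natCast, toWord_inv, toWord_of_pow]
    simp [invRev]

theorem toWord_of_zpow_ne_nil {i : α} {n : ℤ} (hn : n ≠ 0) : (of i ^ n).toWord ≠ [] := by
  simpa [toWord_of_zpow]

theorem toWord_of_zpow_inj {i j : α} {m n : ℤ} (hm : m ≠ 0)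
    (h : (of i ^ m).toWord = (of j ^ n).toWord) : i = j ∧ m = n := by
  simp only [toWord_of_zpow, List.replicate_inj, Int.natAbs_eq_zero, hm, false_or, Prod.mk.injEq,
    decide_eq_decide] at h
  exact ⟨h.2.1, by omega⟩

theorem fst_eq_of_mem_toWord_of_zpow {i : α} {n : ℤ} {x : α × Bool}
    (hx : x ∈ (of i ^ n).toWord) : x.1 = i := by
  rw [toWord_of_zpow] at hx
  rw [List.eq_of_mem_replicate hx]

/-- The concatenation of the reduced words of the syllables in a list. -/
def syllableWord (rs : List (α × ℤ)) : List (α × Bool) :=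
  (rs.map fun r => (of r.1 ^ r.2).toWord).flatten

theorem mk_syllableWord (rs : List (α × ℤ)) : mk (syllableWord rs) = syllableProd rs := by
  induction rs with
  | nil => rfl
  | cons r rs ih =>
    rw [syllableWord, syllableProd, List.map_cons, List.map_cons, List.flatten_cons,
      List.prod_cons, ← mul_mk, mk_toWord]
    exact congrArg _ ih

namespace IsCyclicSyllableList

theorem nil_notMem (h : IsCyclicSyllableList rs) :
    [] ∉ rs.map fun r => (of r.1 ^ r.2).toWord := by
  rw [List.mem_map]
  rintro ⟨r, hr, hr'⟩
  exact toWord_of_zpow_ne_nil (h.ne_zero r hr) hr'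

theorem isReduced_syllableWord (h : IsCyclicSyllableList rs) :
    FreeGroup.IsReduced (syllableWord rs) := by
  refine (List.isChain_flatten h.nil_notMem).2 ⟨?_, ?_⟩
  · rw [List.forall_mem_map]
    exact fun _ _ => isReduced_toWord
  · refine List.isChain_map_of_isChain _ (fun r s hrs x hx y hy hxy => ?_) h.isChain
    have hx' := fst_eq_of_mem_toWord_of_zpow (List.mem_of_mem_getLast? hx)
    have hy' := fst_eq_of_mem_toWord_of_zpow (List.mem_of_mem_head? hy)
    exact absurd (hx' ▸ hy' ▸ hxy) hrs

theorem exists_mem_head (h : IsCyclicSyllableList rs) {x : α × Bool}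
    (hx : x ∈ (syllableWord rs).head?) : ∃ r ∈ rs.head?, x.1 = r.1 := by
  cases rs with
  | nil => simp [syllableWord] at hx
  | cons r rs =>
    rw [syllableWord, List.map_cons, List.flatten_cons,
      List.head?_append_of_ne_nil _ (toWord_of_zpow_ne_nil (h.ne_zero r (by simp)))] at hx
    exact ⟨r, rfl, fst_eq_of_mem_toWord_of_zpow (List.mem_of_mem_head? hx)⟩

theorem exists_mem_getLast (h : IsCyclicSyllableList rs) {x : α × Bool}
    (hx : x ∈ (syllableWord rs).getLast?) : ∃ r ∈ rs.getLast?, x.1 = r.1 := by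
  obtain rfl | ⟨rs, r, rfl⟩ := List.eq_nil_or_concat rs
  · simp [syllableWord] at hx
  · rw [syllableWord, List.concat_eq_append, List.map_append, List.flatten_append,
      List.map_singleton, List.flatten_singleton,
      List.getLast?_append_of_ne_nil _ (toWord_of_zpow_ne_nil (h.ne_zero r (by simp)))] at hx
    exact ⟨r, by simp, fst_eq_of_mem_toWord_of_zpow (List.mem_of_mem_getLast? hx)⟩

theorem fst_ne_of_mem_getLast_of_mem_head (h : IsCyclicSyllableList rs) :
    ∀ x ∈ (syllableWord rs).getLast?, ∀ y ∈ (syllableWord rs).head?, x.1 ≠ y.1 := by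
  intro x hx y hy
  obtain ⟨r, hr, hxr⟩ := h.exists_mem_getLast hx
  obtain ⟨s, hs, hys⟩ := h.exists_mem_head hy
  rw [hxr, hys]
  exact h.getLast_ne_head r hr s hs

theorem isCyclicallyReduced_syllableWord (h : IsCyclicSyllableList rs) :
    IsCyclicallyReduced (syllableWord rs) :=
  ⟨h.isReduced_syllableWord, fun x hx y hy hxy =>
    absurd hxy (h.fst_ne_of_mem_getLast_of_mem_head x hx y hy)⟩

theorem splitBy_syllableWord (h : IsCyclicSyllableList rs) :
    (syllableWord rs).splitBy (fun x y => x.1 = y.1) = rs.map fun r => (of r.1 ^ r.2).toWord := by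
  refine List.splitBy_flatten h.nil_notMem ?_ ?_
  · rw [List.forall_mem_map]
    intro r _
    rw [toWord_of_zpow]
    exact List.isChain_replicate_of_rel _ (by simp)
  · rw [List.isChain_map]
    refine h.isChain.imp_of_mem_imp fun r s hr hs hrs => ?_
    have hr' := toWord_of_zpow_ne_nil (i := r.1) (h.ne_zero r hr)
    have hs' := toWord_of_zpow_ne_nil (i := s.1) (h.ne_zero s hs)
    refine ⟨hr', hs', decide_eq_false ?_⟩
    rwa [fst_eq_of_mem_toWord_of_zpow (List.getLast_mem hr'),
      fst_eq_of_mem_toWord_of_zpow (List.head_mem hs')]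

theorem isRotated_map_toWord (h : IsCyclicSyllableList rs) (h' : IsCyclicSyllableList rs')
    (hconj : IsConj (syllableProd rs) (syllableProd rs')) :
    (rs.map fun r => (of r.1 ^ r.2).toWord) ~r rs'.map fun r => (of r.1 ^ r.2).toWord := by
  rw [← mk_syllableWord, ← mk_syllableWord] at hconj
  have hrot := isRotated_of_isConj_mk h.isCyclicallyReduced_syllableWord
    h'.isCyclicallyReduced_syllableWord hconj
  rw [← h.splitBy_syllableWord, ← h'.splitBy_syllableWord]
  exact isRotated_splitBy _ hrot (by simpa using h.fst_ne_of_mem_getLast_of_mem_head)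
    (by simpa using h'.fst_ne_of_mem_getLast_of_mem_head)

end IsCyclicSyllableList

end ReducedWord

namespace IsCyclicSyllableList

theorem mem_of_isConj (h : IsCyclicSyllableList rs) (h' : IsCyclicSyllableList rs')
    (hconj : IsConj (syllableProd rs) (syllableProd rs')) {r : α × ℤ} (hr : r ∈ rs) :
    r ∈ rs' := by
  classical
  have hmem := (h.isRotated_map_toWord h' hconj).mem_iff.1 (List.mem_map_of_mem hr)
  obtain ⟨s, hs, hsr⟩ := List.mem_map.1 hmem
  obtain ⟨hfst, hsnd⟩ := toWord_of_zpow_inj (h'.ne_zero s hs) hsr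
  exact Prod.ext hfst hsnd ▸ hs

theorem mem_iff_of_isConj (h : IsCyclicSyllableList rs) (h' : IsCyclicSyllableList rs')
    (hconj : IsConj (syllableProd rs) (syllableProd rs')) {r : α × ℤ} : r ∈ rs ↔ r ∈ rs' :=
  ⟨h.mem_of_isConj h' hconj, h'.mem_of_isConj h hconj.symm⟩

theorem mem_iff_of_isConj_zpow (h : IsCyclicSyllableList rs) (h' : IsCyclicSyllableList rs')
    {ε : ℤˣ} (hconj : IsConj (syllableProd rs ^ (ε : ℤ)) (syllableProd rs')) {i : α} {n : ℤ} :
    (i, n) ∈ rs ↔ (i, ε * n) ∈ rs' := by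
  obtain rfl | rfl := Int.units_eq_one_or ε
  · simpa using h.mem_iff_of_isConj h' (by simpa using hconj)
  · have hconj' : IsConj (syllableProd rs)⁻¹ (syllableProd rs') := by simpa using hconj
    rw [syllableProd_inv] at hconj'
    simp [← h.inv.mem_iff_of_isConj h' hconj']

theorem not_isConj_of_zpow (h : IsCyclicSyllableList rs) (hrs : rs ≠ []) (i : α) (n : ℤ) :
    ¬IsConj (syllableProd rs) (of i ^ n) := by
  classical
  intro hconj
  have hne : syllableWord rs ≠ [] := by
    obtain ⟨r, hr⟩ := List.exists_mem_of_ne_nil rs hrs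
    rw [syllableWord, List.flatten_ne_nil_iff]
    exact ⟨_, List.mem_map_of_mem hr, toWord_of_zpow_ne_nil (h.ne_zero r hr)⟩
  have hrot : syllableWord rs ~r (of i ^ n).toWord :=
    isRotated_of_isConj_mk h.isCyclicallyReduced_syllableWord
      ⟨isReduced_toWord, fun x hx y hy _ => by
        rw [toWord_of_zpow] at hx hy
        rw [List.eq_of_mem_replicate (List.mem_of_mem_getLast? hx),
          List.eq_of_mem_replicate (List.mem_of_mem_head? hy)]⟩
      (by rwa [mk_syllableWord, mk_toWord])
  have hbase {x : α × Bool} (hx : x ∈ syllableWord rs) : x.1 = i :=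
    fst_eq_of_mem_toWord_of_zpow (hrot.mem_iff.1 hx)
  exact h.fst_ne_of_mem_getLast_of_mem_head _ (List.getLast?_eq_some_getLast hne) _
    (List.head?_eq_some_head hne)
    ((hbase (List.getLast_mem hne)).trans (hbase (List.head_mem hne)).symm)

end IsCyclicSyllableList

end Syllables

section Blocks

variable {α : Type*} {i j : α}

/-- The syllables of `∏ i ^ m * j ^ n`, the product being over the pairs `(m, n)` in the list. -/
def blockSyllables (i j : α) (l : List (ℤ × ℤ)) : List (α × ℤ) :=
  l.flatMap fun k => [(i, k.1), (j, k.2)]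

theorem syllableProd_blockSyllables (i j : α) (l : List (ℤ × ℤ)) :
    syllableProd (blockSyllables i j l) = (l.map fun k => of i ^ k.1 * of j ^ k.2).prod := by
  induction l with
  | nil => rfl
  | cons k l ih => simp_all [syllableProd, blockSyllables, mul_assoc]

theorem syllableProd_blockSyllables_ofFn (i j : α) {k : ℕ} (m n : Fin k → ℤ) :
    syllableProd (blockSyllables i j (List.ofFn fun l => (m l, n l))) =
      (List.ofFn fun l => of i ^ m l * of j ^ n l).prod := by
  rw [syllableProd_blockSyllables, List.map_ofFn]
  rfl

theorem blockSyllables_ne_nil {l : List (ℤ × ℤ)} (hl : l ≠ []) : blockSyllables i j l ≠ [] := by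
  cases l <;> simp_all [blockSyllables]

theorem mem_blockSyllables_left (hij : i ≠ j) {l : List (ℤ × ℤ)} {n : ℤ} :
    (i, n) ∈ blockSyllables i j l ↔ n ∈ l.map Prod.fst := by
  simp [blockSyllables, hij, eq_comm]

theorem mem_blockSyllables_right (hij : i ≠ j) {l : List (ℤ × ℤ)} {n : ℤ} :
    (j, n) ∈ blockSyllables i j l ↔ n ∈ l.map Prod.snd := by
  simp [blockSyllables, hij.symm]

theorem fst_eq_of_mem_head_blockSyllables {l : List (ℤ × ℤ)} {r : α × ℤ}
    (hr : r ∈ (blockSyllables i j l).head?) : r.1 = i := by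
  cases l with
  | nil => simp [blockSyllables] at hr
  | cons k l => simp_all [blockSyllables, eq_comm]

theorem fst_eq_of_mem_getLast_blockSyllables {l : List (ℤ × ℤ)} {r : α × ℤ}
    (hr : r ∈ (blockSyllables i j l).getLast?) : r.1 = j := by
  obtain rfl | ⟨l, k, rfl⟩ := List.eq_nil_or_concat l
  · simp [blockSyllables] at hr
  · simp_all [blockSyllables, eq_comm]

theorem isCyclicSyllableList_blockSyllables (hij : i ≠ j) {l : List (ℤ × ℤ)}
    (hl : ∀ k ∈ l, k.1 ≠ 0 ∧ k.2 ≠ 0) : IsCyclicSyllableList (blockSyllables i j l) where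
  ne_zero := by
    simp only [blockSyllables, List.mem_flatMap]
    rintro _ ⟨k, hk, hr⟩
    obtain rfl | rfl : _ = (i, k.1) ∨ _ = (j, k.2) := by simpa using hr
    exacts [(hl k hk).1, (hl k hk).2]
  isChain := by
    induction l with
    | nil => simp [blockSyllables]
    | cons k l ih =>
      rw [blockSyllables, List.flatMap_cons, List.isChain_append]
      refine ⟨by simpa, ih fun k hk => hl k (List.mem_cons_of_mem _ hk), fun r hr s hs => ?_⟩
      obtain rfl : r = (j, k.2) := by simpa [eq_comm] using hr
      rw [fst_eq_of_mem_head_blockSyllables hs]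
      exact hij.symm
  getLast_ne_head := by
    intro r hr s hs
    rw [fst_eq_of_mem_getLast_blockSyllables hr, fst_eq_of_mem_head_blockSyllables hs]
    exact hij.symm

theorem blockProd_zpow_of (i j : α) (δ γ : ℤ) (e : List ℕ) :
    blockProd (of i ^ δ) (of j ^ γ) e =
      syllableProd (blockSyllables j i (e.map fun n : ℕ => (γ, δ * (n : ℤ)))) := by
  rw [syllableProd_blockSyllables, List.map_map, blockProd]
  simp [Function.comp_def, zpow_mul]

variable {rs rs' : List (α × ℤ)} {δ γ ε : ℤˣ} {x y : FreeGroup α}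

theorem IsCyclicSyllableList.exponents_of_isConj_blockProd (hrs : IsCyclicSyllableList rs)
    (hij : i ≠ j) {e : List ℕ} (he : ∀ n ∈ e, n ≠ 0)
    (h : IsConj (syllableProd rs ^ (ε : ℤ)) (blockProd (of i ^ (δ : ℤ)) (of j ^ (γ : ℤ)) e)) :
    (∀ n, (j, n) ∈ rs → ε * (γ * n) = 1) ∧
      ∀ n : ℤ, (∃ k, (i, k) ∈ rs ∧ n = ε * (δ * k)) ↔ ∃ k ∈ e, (k : ℤ) = n := by
  have hcyc : IsCyclicSyllableList (blockSyllables j i (e.map fun n : ℕ => (↑γ, δ * (n : ℤ)))) :=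
    isCyclicSyllableList_blockSyllables hij.symm (by simpa using he)
  rw [blockProd_zpow_of] at h
  have hmem (k : α) (n : ℤ) := hrs.mem_iff_of_isConj_zpow hcyc h (i := k) (n := n)
  have hunit (η : ℤˣ) (k : ℤ) : η * (η * k) = k := by
    rw [← mul_assoc, Int.units_coe_mul_self, one_mul]
  simp only [hmem, mem_blockSyllables_left hij.symm, mem_blockSyllables_right hij.symm,
    List.map_map, List.mem_map, Function.comp_apply]
  refine ⟨?_, fun n => ⟨?_, ?_⟩⟩
  · rintro n ⟨-, -, hn⟩
    rw [mul_left_comm, ← hn, Int.units_coe_mul_self]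
  · rintro ⟨k, ⟨l, hl, hlk⟩, rfl⟩
    exact ⟨l, hl, by rw [mul_left_comm, ← hlk, hunit]⟩
  · rintro ⟨l, hl, rfl⟩
    exact ⟨ε * (δ * l), ⟨l, hl, (hunit ε _).symm⟩, by rw [mul_left_comm, hunit, hunit]⟩

/-- In the syllable lists `rs` and `rs'`, all exponents of `j` are `1` and the exponents of `i`
form the set `{t, t + 1}` for some `t > 0`, once the exponents of `i` are multiplied by `δ`, those
of `j` by `γ`, and those in `rs'` by `ε`. -/
def HasConsecutiveExponents (i j : α) (δ γ ε : ℤˣ) (rs rs' : List (α × ℤ)) : Prop :=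
  ∃ t : ℤ, 0 < t ∧ (∀ n, (j, n) ∈ rs → γ * n = 1) ∧ (∀ n, (j, n) ∈ rs' → ε * (γ * n) = 1) ∧
    {z : ℤ | (∃ n, (i, n) ∈ rs ∧ z = δ * n) ∨ ∃ n, (i, n) ∈ rs' ∧ z = ε * (δ * n)} = {t, t + 1}

theorem HasBlockForm.hasConsecutiveExponents
    (h : HasBlockForm (of i ^ (δ : ℤ)) (of j ^ (γ : ℤ)) x (y ^ (ε : ℤ))) (hij : i ≠ j)
    (hrs : IsCyclicSyllableList rs) (hrs' : IsCyclicSyllableList rs')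
    (hx : IsConj (syllableProd rs) x) (hy : IsConj (syllableProd rs') y) :
    HasConsecutiveExponents i j δ γ ε rs rs' := by
  obtain ⟨t, ht, g, e, e', rfl, hye, hmem⟩ := h
  have hne {n : ℕ} (hn : n ∈ e ∨ n ∈ e') : n ≠ 0 := by
    have := (hmem n).1 hn
    omega
  obtain ⟨hj, hi⟩ := hrs.exponents_of_isConj_blockProd (ε := 1) hij (fun n hn => hne (.inl hn))
    (by simpa using hx.trans (isConj_inv_mul_mul g _))
  obtain ⟨hj', hi'⟩ := hrs'.exponents_of_isConj_blockProd hij (fun n hn => hne (.inr hn))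
    ((isConj_zpow hy ε).trans (hye ▸ isConj_inv_mul_mul g _))
  simp only [Units.val_one, one_mul] at hj hi
  refine ⟨t, by exact_mod_cast ht, hj, hj', Set.ext fun z => ?_⟩
  simp only [Set.mem_ofPred_eq, hi, hi', ← exists_or, ← or_and_right, hmem]
  simp [or_and_right, exists_or, eq_comm]

end Blocks

section RankTwo

theorem GeneratingPair.exists_hasBlockForm {x y : F2} (h : GeneratingPair x y)
    (hx : ∀ (i : Fin 2) (n : ℤ), ¬IsConj x (of i ^ n))
    (hy : ∀ (i : Fin 2) (n : ℤ), ¬IsConj y (of i ^ n)) :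
    ∃ δ γ ε : ℤˣ, HasBlockForm (ga ^ (δ : ℤ)) (gb ^ (γ : ℤ)) x (y ^ (ε : ℤ)) ∨
      HasBlockForm (gb ^ (γ : ℤ)) (ga ^ (δ : ℤ)) x (y ^ (ε : ℤ)) := by
  obtain ⟨δ, γ, ε, hpos⟩ := h.nielsen_induction (IsPositivizable.nielsenClosed ga gb)
    PositivePair.base.isPositivizable
  have hy' (i : Fin 2) (n : ℤ) : ¬IsConj (y ^ (ε : ℤ)) (of i ^ n) := fun hconj =>
    hy i (n * ε) (by simpa [zpow_mul, ← zpow_mul y] using isConj_zpow hconj ε)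
  exact ⟨δ, γ, ε, hpos.hasPositiveShape.imp (fun h => h.hasBlockForm (hx 0 δ) (hy' 0 δ))
    fun h => h.hasBlockForm (hx 1 γ) (hy' 1 γ)⟩

theorem GeneratingPair.hasConsecutiveExponents {x y : F2} (h : GeneratingPair x y)
    {rs rs' : List (Fin 2 × ℤ)} (hrs : IsCyclicSyllableList rs) (hrs' : IsCyclicSyllableList rs')
    (hne : rs ≠ []) (hne' : rs' ≠ []) (hx : IsConj (syllableProd rs) x)
    (hy : IsConj (syllableProd rs') y) :
    ∃ δ γ ε : ℤˣ, HasConsecutiveExponents 0 1 δ γ ε rs rs' ∨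
      HasConsecutiveExponents 1 0 γ δ ε rs rs' := by
  obtain ⟨δ, γ, ε, hform⟩ := h.exists_hasBlockForm
    (fun i n hxi => hrs.not_isConj_of_zpow hne i n (hx.trans hxi))
    fun i n hyi => hrs'.not_isConj_of_zpow hne' i n (hy.trans hyi)
  exact ⟨δ, γ, ε, hform.imp
    (fun hform => hform.hasConsecutiveExponents zero_ne_one hrs hrs' hx hy)
    fun hform => hform.hasConsecutiveExponents one_ne_zero hrs hrs' hx hy⟩

end RankTwo

/-- Cohen–Metzler–Zimmermann: if cyclically reduced words
`u = a^{n₁} b^{m₁} ⋯ a^{n_p} b^{m_p}` and `v = a^{r₁} b^{s₁} ⋯ a^{r_q} b^{s_q}`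
(all exponents nonzero) have conjugates forming a basis of `F₂`, then after possibly
replacing `a` by `a⁻¹` (sign `δ`) or `b` by `b⁻¹` (sign `γ`) throughout, there are
`t > 0` and `ε = ±1` such that either all `b`-exponents equal 1 (resp. `ε`) and the
`a`-exponents form the set `{t, t+1}`, or symmetrically. -/
theorem cohen_metzler_zimmermann (p q : ℕ) (hp : 1 ≤ p) (hq : 1 ≤ q)
    (n m : Fin p → ℤ) (r s : Fin q → ℤ)
    (hn : ∀ i, n i ≠ 0) (hm : ∀ i, m i ≠ 0) (hr : ∀ j, r j ≠ 0) (hs : ∀ j, s j ≠ 0)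
    (u v : F2)
    (hu : u = (List.ofFn fun i => ga ^ (n i) * gb ^ (m i)).prod)
    (hv : v = (List.ofFn fun j => ga ^ (r j) * gb ^ (s j)).prod)
    (hucr : CyclicallyReduced u.toWord) (hvcr : CyclicallyReduced v.toWord)
    (hbasis : ∃ g h : F2, IsBasis (g⁻¹ * u * g) (h⁻¹ * v * h)) :
    ∃ δ γ : ℤ, (δ = 1 ∨ δ = -1) ∧ (γ = 1 ∨ γ = -1) ∧
    ∃ t : ℤ, 0 < t ∧ ∃ ε : ℤ, (ε = 1 ∨ ε = -1) ∧
      (((∀ i, γ * m i = 1) ∧ (∀ j, ε * (γ * s j) = 1) ∧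
        ({x : ℤ | (∃ i, x = δ * n i) ∨ ∃ j, x = ε * (δ * r j)} = {t, t + 1})) ∨
       ((∀ i, δ * n i = 1) ∧ (∀ j, ε * (δ * r j) = 1) ∧
        ({x : ℤ | (∃ i, x = γ * m i) ∨ ∃ j, x = ε * (γ * s j)} = {t, t + 1}))) := by
  obtain ⟨g, h, hbasis⟩ := hbasis
  have hne {k : ℕ} (hk : 1 ≤ k) (f : Fin k → ℤ × ℤ) : List.ofFn f ≠ [] :=
    List.ofFn_eq_nil_iff.not.2 (by omega)
  obtain ⟨δ, γ, ε, hexp⟩ := hbasis.generatingPair.hasConsecutiveExponents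
    (isCyclicSyllableList_blockSyllables zero_ne_one (by simp [hn, hm]))
    (isCyclicSyllableList_blockSyllables zero_ne_one (by simp [hr, hs]))
    (blockSyllables_ne_nil (hne hp fun i => (n i, m i)))
    (blockSyllables_ne_nil (hne hq fun j => (r j, s j)))
    (by rw [syllableProd_blockSyllables_ofFn]; exact hu ▸ (isConj_inv_mul_mul g u).symm)
    (by rw [syllableProd_blockSyllables_ofFn]; exact hv ▸ (isConj_inv_mul_mul h v).symm)
  refine ⟨δ, γ, Int.isUnit_iff.1 δ.isUnit, Int.isUnit_iff.1 γ.isUnit, ?_⟩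
  simp only [HasConsecutiveExponents, mem_blockSyllables_left (zero_ne_one (α := Fin 2)),
    mem_blockSyllables_right (zero_ne_one (α := Fin 2)), List.map_ofFn, List.mem_ofFn,
    Function.comp_apply, forall_exists_index, forall_apply_eq_imp_iff,
    exists_exists_eq_and] at hexp
  obtain ⟨t, ht, hexp⟩ | ⟨t, ht, hexp⟩ := hexp
  · exact ⟨t, ht, ε, Int.isUnit_iff.1 ε.isUnit, .inl hexp⟩
  · exact ⟨t, ht, ε, Int.isUnit_iff.1 ε.isUnit, .inr hexp⟩
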